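/- For every real number x and every real t with |t| < π/2, the series Σ_{n≥0} D̄^{(1,0,∅,0)}_{2n+1}(x) · t^{2n+1}/(2n+1)! converges and its sum equals x·(sec t)^x·∫_0^t (cos z)^x dz, where sec t = 1/cos t. -/

import Mathlib

/-- A permutation `σ` of `{1,…,n}` (as a permutation of `Fin n`) is up-down if
`σ_1 < σ_2 > σ_3 < σ_4 > ⋯`. -/
def UpDown {n : ℕ} (σ : Equiv.Perm (Fin n)) : Prop :=
  ∀ i : Fin n, ∀ h : i.val + 1 < n,
    if Even i.val then σ i < σ ⟨i.val + 1, h⟩ else σ ⟨i.val + 1, h⟩ < σ i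

/-- A permutation is down-up if `σ_1 > σ_2 < σ_3 > σ_4 < ⋯`. -/
def DownUp {n : ℕ} (σ : Equiv.Perm (Fin n)) : Prop :=
  ∀ i : Fin n, ∀ h : i.val + 1 < n,
    if Even i.val then σ ⟨i.val + 1, h⟩ < σ i else σ i < σ ⟨i.val + 1, h⟩

/-- `σ_i` matches `MMP(1,0,∅,0)`: there exists `j > i` with `σ_j > σ_i` and
there is no `j < i` with `σ_j < σ_i`. -/
def Matches1 {n : ℕ} (σ : Equiv.Perm (Fin n)) (i : Fin n) : Prop :=
  (∃ j, i < j ∧ σ i < σ j) ∧ ¬ ∃ j, j < i ∧ σ j < σ i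

/-- `mmp^{(1,0,∅,0)}(σ)`: the number of indices matching `MMP(1,0,∅,0)` in `σ`. -/
noncomputable def mmp1 {n : ℕ} (σ : Equiv.Perm (Fin n)) : ℕ :=
  {i : Fin n | Matches1 σ i}.ncard

open scoped Classical in
/-- `D̄^{(1,0,∅,0)}_{2n+1}(x) = Σ_{σ ∈ DU_{2n+1}} x^{mmp^{(1,0,∅,0)}(σ) + χ(σ_1 = 2n+1)}`,
where `χ(σ_1 = 2n+1)` is 1 if the first entry of `σ` is the largest value `2n+1`
(i.e. `2*n` as an element of `Fin (2n+1)`) and 0 otherwise. -/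
noncomputable def Dbar (n : ℕ) (x : ℝ) : ℝ :=
  ∑ σ : Equiv.Perm (Fin (2*n+1)), if DownUp σ
    then x ^ (mmp1 σ + if (σ ⟨0, by omega⟩).val = 2*n then 1 else 0) else 0

open Classical in
/-- product weight: `x` for each left-to-right minimum -/
noncomputable def Wt (x : ℝ) {n : ℕ} (σ : Equiv.Perm (Fin n)) : ℝ :=
  ∏ i : Fin n, if ∀ j, j < i → σ i < σ j then x else 1

/-- append last value `p.1` to `p.2` -/
def extFun {m : ℕ} (p : Fin (m+1) × Equiv.Perm (Fin m)) : Fin (m+1) → Fin (m+1) :=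
  Fin.snoc (α := fun _ => Fin (m+1)) (fun i => p.1.succAbove (p.2 i)) p.1

lemma extFun_inj {m : ℕ} (p : Fin (m+1) × Equiv.Perm (Fin m)) : Function.Injective (extFun p) := by
  intro a b
  refine Fin.lastCases ?_ (fun i => ?_) a <;> refine Fin.lastCases ?_ (fun j => ?_) b <;>
    simp [extFun, Fin.succAbove_ne, (Fin.succAbove_ne _ _).symm]

noncomputable def extPerm {m : ℕ} (p : Fin (m+1) × Equiv.Perm (Fin m)) : Equiv.Perm (Fin (m+1)) :=
  Equiv.ofBijective (extFun p) (Finite.injective_iff_bijective.mp (extFun_inj p))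

@[simp] lemma extPerm_last {m : ℕ} (p : Fin (m+1) × Equiv.Perm (Fin m)) :
    extPerm p (Fin.last m) = p.1 := by simp [extPerm, extFun]

@[simp] lemma extPerm_castSucc {m : ℕ} (p : Fin (m+1) × Equiv.Perm (Fin m)) (i : Fin m) :
    extPerm p i.castSucc = p.1.succAbove (p.2 i) := by simp [extPerm, extFun]

lemma extPerm_bij (m : ℕ) : Function.Bijective (extPerm (m := m)) := by
  rw [Fintype.bijective_iff_injective_and_card]
  constructor
  · rintro ⟨k, τ⟩ ⟨l, ρ⟩ h
    have h1 : k = l := by simpa using congrArg (fun s => s (Fin.last m)) h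
    subst h1
    have h2 : τ = ρ := by
      ext i
      have := congrArg (fun s => s i.castSucc) h
      simp at this
      simp [this]
    rw [h2]
  · simp [Fintype.card_perm, Nat.factorial_succ]

lemma Wt_ext (x : ℝ) {m : ℕ} (k : Fin (m+2)) (τ : Equiv.Perm (Fin (m+1))) :
    Wt x (extPerm (k, τ)) = Wt x τ * (if k.val = 0 then x else 1) := by
  unfold Wt
  rw [Fin.prod_univ_castSucc]
  congr 1
  · refine Finset.prod_congr rfl fun i _ => ?_
    congr 1
    apply propext
    constructor
    · intro h j hj
      have := h j.castSucc (by simpa using hj)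
      simpa using this
    · intro h j
      refine Fin.lastCases ?_ (fun j => ?_) j
      · intro hj
        exact absurd hj (not_lt.mpr (Fin.le_last _))
      · intro hj
        simpa using h j (by simpa using hj)
  · congr 1
    apply propext
    simp only [extPerm_last]
    constructor
    · intro h
      by_contra hk
      have := h (Fin.castSucc (τ.symm 0)) (Fin.castSucc_lt_last _)
      simp only [extPerm_castSucc, Equiv.apply_symm_apply] at this
      rw [Fin.succAbove_ne_zero_zero (by intro h0; apply hk; simp [h0])] at this
      simp at this
    · intro h j
      have hk : k = 0 := Fin.ext h
      subst hk
      refine Fin.lastCases ?_ (fun j => ?_) j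
      · intro hj; exact absurd hj (lt_irrefl _)
      · intro _; simp

lemma DownUp_ext {m : ℕ} (k : Fin (m+2)) (τ : Equiv.Perm (Fin (m+1))) :
    DownUp (extPerm (k, τ)) ↔ DownUp τ ∧
      (if Even m then k.val ≤ (τ (Fin.last m)).val else (τ (Fin.last m)).val < k.val) := by
  have e1 : (⟨m, by omega⟩ : Fin (m+2)) = (Fin.last m).castSucc := rfl
  have e2 : (⟨m+1, by omega⟩ : Fin (m+2)) = Fin.last (m+1) := rfl
  have key1 : (k < k.succAbove (τ (Fin.last m))) ↔ k.val ≤ (τ (Fin.last m)).val := by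
    rw [Fin.lt_succAbove_iff_le_castSucc, Fin.le_def]; simp
  have key2 : (k.succAbove (τ (Fin.last m)) < k) ↔ (τ (Fin.last m)).val < k.val := by
    rw [Fin.succAbove_lt_iff_castSucc_lt, Fin.lt_def]; simp
  constructor
  · intro h
    refine ⟨fun i hi => ?_, ?_⟩
    · have := h i.castSucc (by simp; omega)
      have e : (⟨i.castSucc.val + 1, by simp; omega⟩ : Fin (m+2)) = Fin.castSucc ⟨i.val+1, hi⟩ := rfl
      simp only [e, extPerm_castSucc, Fin.succAbove_lt_succAbove_iff] at this
      exact this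
    · have := h ⟨m, by omega⟩ (by simp)
      simp only [e1, e2, extPerm_last, extPerm_castSucc, key1, key2] at this
      exact this
  · rintro ⟨h1, h2⟩ i hi
    by_cases him : i.val = m
    · obtain ⟨i, hi'⟩ := i
      simp only at him
      subst him
      simp only [e1, e2, extPerm_last, extPerm_castSucc, key1, key2]
      exact h2
    · obtain ⟨i, hi'⟩ := i
      simp only at him hi
      have := h1 ⟨i, by omega⟩ (by simp; omega)
      have e : (⟨i + 1, hi⟩ : Fin (m+2)) = Fin.castSucc ⟨i+1, by omega⟩ := rfl
      have e' : (⟨i, hi'⟩ : Fin (m+2)) = Fin.castSucc ⟨i, by omega⟩ := rfl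
      simp only [e, e', extPerm_castSucc, Fin.succAbove_lt_succAbove_iff]
      exact this

open Classical in
noncomputable def LL (x : ℝ) (m : ℕ) (g : ℕ → ℝ) : ℝ :=
  ∑ σ : Equiv.Perm (Fin (m+1)), if DownUp σ then Wt x σ * g (σ (Fin.last m)).val else 0

lemma LL_congr (x : ℝ) (m : ℕ) (g h : ℕ → ℝ) (H : ∀ j ≤ m, g j = h j) : LL x m g = LL x m h := by
  unfold LL
  refine Finset.sum_congr rfl fun σ _ => ?_
  rw [H _ (by have := (σ (Fin.last m)).isLt; omega)]

lemma LL_zero (x : ℝ) (g : ℕ → ℝ) : LL x 0 g = x * g 0 := by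
  unfold LL
  have : Unique (Equiv.Perm (Fin (0+1))) := inferInstanceAs (Unique (Equiv.Perm (Fin 1)))
  rw [Fintype.sum_unique, if_pos]
  · simp [Wt]
  · intro i hi; omega

lemma LL_lin (x : ℝ) (m : ℕ) (a : ℝ) (g : ℕ → ℝ) :
    LL x m (fun j => a - g j) = a * LL x m (fun _ => 1) - LL x m g := by
  unfold LL
  rw [Finset.mul_sum, ← Finset.sum_sub_distrib]
  refine Finset.sum_congr rfl fun σ _ => ?_
  split_ifs <;> ring

lemma LL_succ (x : ℝ) (m : ℕ) (g : ℕ → ℝ) : LL x (m+1) g = LL x m (fun j =>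
    ∑ k ∈ Finset.range (m+2), if (if Even m then k ≤ j else j < k) then
      (if k = 0 then x else 1) * g k else 0) := by
  classical
  unfold LL
  rw [← (Equiv.ofBijective _ (extPerm_bij (m+1))).sum_comp, Fintype.sum_prod_type_right]
  refine Finset.sum_congr rfl fun τ _ => ?_
  simp only [Equiv.ofBijective_apply, extPerm_last, Wt_ext, DownUp_ext]
  by_cases h : DownUp τ
  · simp only [h, true_and, if_true]
    rw [Finset.sum_range, Finset.mul_sum]
    refine Finset.sum_congr rfl fun k _ => ?_
    split_ifs <;> ring
  · simp [h]

lemma LL_down (x : ℝ) (p : ℕ) (g : ℕ → ℝ) : LL x (2*p+1) g = LL x (2*p) (fun j =>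
    ∑ k ∈ Finset.range (j+1), g k + (x-1) * g 0) := by
  rw [LL_succ]
  refine LL_congr _ _ _ _ fun j hj => ?_
  have he : Even (2*p) := even_two_mul p
  simp only [he, if_true]
  rw [← Finset.sum_filter]
  have : (Finset.range (2*p+2)).filter (fun k => k ≤ j) = Finset.range (j+1) := by
    ext k; simp; omega
  rw [this, Finset.sum_range_succ', Finset.sum_range_succ']
  simp; ring

lemma LL_up (x : ℝ) (p : ℕ) (g : ℕ → ℝ) : LL x (2*p+2) g = LL x (2*p+1) (fun j =>
    ∑ k ∈ Finset.Icc (j+1) (2*p+2), g k) := by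
  rw [LL_succ]
  refine LL_congr _ _ _ _ fun j hj => ?_
  have he : ¬ Even (2*p+1) := by simp
  simp only [he]
  rw [← Finset.sum_filter]
  have : (Finset.range (2*p+1+2)).filter (fun k => if False then k ≤ j else j < k)
      = Finset.Icc (j+1) (2*p+2) := by
    ext k; simp; omega
  rw [this]
  refine Finset.sum_congr rfl fun k hk => ?_
  simp at hk
  rw [if_neg (by omega), one_mul]

lemma ch_range (c r j : ℕ) (h : j ≤ c) : ∑ k ∈ Finset.range (j+1), ((c-k).choose r : ℝ) =
    (c+1).choose (r+1) - (c-j).choose (r+1) := by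
  induction j with
  | zero => simp [Nat.choose_succ_succ]
  | succ j ih =>
    rw [Finset.sum_range_succ, ih (by omega)]
    have : c - j = (c-(j+1)) + 1 := by omega
    rw [this, Nat.choose_succ_succ (c-(j+1))]; push_cast; ring

lemma ch_Icc (c r b j : ℕ) (hj : j ≤ b) (hb : b ≤ c) :
    ∑ k ∈ Finset.Icc (j+1) b, ((c-k).choose r : ℝ) =
    (c-j).choose (r+1) - (c-b).choose (r+1) := by
  induction b, hj using Nat.le_induction with
  | base => simp
  | succ b h ih =>
    rw [Finset.sum_Icc_succ_top (by omega), ih (by omega)]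
    have : c - b = (c-(b+1)) + 1 := by omega
    rw [this, Nat.choose_succ_succ]; push_cast; ring

lemma LL_step (x : ℝ) (p i : ℕ) :
    LL x (2*(p+1)) (fun k => ((2*(p+1+i)-k).choose (2*i) : ℝ)) =
    LL x (2*p) (fun _ => 1) * ((2*(p+1+i)).choose (2*i+2) + x * (2*(p+1+i)).choose (2*i+1)) -
    LL x (2*p) (fun k => ((2*(p+1+i)-k).choose (2*i+2) : ℝ)) := by
  set c := 2*(p+1+i) with hc
  have e : 2*(p+1) = 2*p+2 := by ring
  rw [e, LL_up, LL_congr x (2*p+1) _ (fun j => ((c-j).choose (2*i+1) : ℝ)), LL_down,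
    mul_comm (LL x (2*p) (fun _ => 1)), ← LL_lin]
  · refine LL_congr _ _ _ _ fun j hj => ?_
    rw [ch_range _ _ _ (by omega), Nat.choose_succ_succ c]
    push_cast
    simp only [Nat.sub_zero]
    ring
  · intro j hj
    rw [ch_Icc _ _ _ _ (by omega) (by omega), Nat.choose_eq_zero_of_lt (by omega : c-(2*p+2) < 2*i+1)]
    simp

lemma LL_rec (x : ℝ) (p i : ℕ) :
    LL x (2*p) (fun k => ((2*(p+i)-k).choose (2*i) : ℝ)) =
    ∑ q ∈ Finset.range p, (-1)^q * LL x (2*(p-1-q)) (fun _ => 1) *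
      ((2*(p+i)).choose (2*(i+q)+2) + x * (2*(p+i)).choose (2*(i+q)+1)) + (-1)^p * x := by
  induction p generalizing i with
  | zero => simp [LL_zero]
  | succ p ih =>
    have h := ih (i+1)
    have e : p + (i+1) = p+1+i := by ring
    have e2 : 2*(i+1) = 2*i+2 := by ring
    rw [e, e2] at h
    rw [LL_step, h, Finset.sum_range_succ']
    have : ∀ q ∈ Finset.range p, (-1)^(q+1) * LL x (2*(p+1-1-(q+1))) (fun _ => 1) *
      (((2*(p+1+i)).choose (2*(i+(q+1))+2) : ℝ) + x * (2*(p+1+i)).choose (2*(i+(q+1))+1))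
      = - ((-1)^q * LL x (2*(p-1-q)) (fun _ => 1) *
      (((2*(p+1+i)).choose (2*(i+1+q)+2) : ℝ) + x * (2*(p+1+i)).choose (2*(i+1+q)+1))) := by
      intro q _
      rw [show p+1-1-(q+1) = p-1-q by omega, show i+(q+1) = i+1+q by ring]; ring
    rw [Finset.sum_congr rfl this, Finset.sum_neg_distrib]
    simp
    ring

lemma DD_rec (x : ℝ) (p : ℕ) :
    LL x (2*p) (fun _ => 1) =
    ∑ q ∈ Finset.range p, (-1)^q * LL x (2*(p-1-q)) (fun _ => 1) *
      ((2*p).choose (2*q+2) + x * (2*p).choose (2*q+1)) + (-1)^p * x := by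
  simpa using LL_rec x p 0

lemma lrmin_match {n : ℕ} (σ : Equiv.Perm (Fin (2*n+1))) (h : DownUp σ) (i : Fin (2*n+1))
    (hi : ∀ j, j < i → σ i < σ j) (h0 : i.val ≠ 0) : ∃ j, i < j ∧ σ i < σ j := by
  have hodd : ¬ Even i.val := by
    intro he
    have h1 := h ⟨i.val - 1, by omega⟩ (by simp; omega)
    have hno : ¬ Even (i.val - 1) := by
      rw [Nat.even_sub (by omega)]; simp [he]
    simp only [hno, if_false] at h1
    have e : (⟨i.val - 1 + 1, by omega⟩ : Fin (2*n+1)) = i := Fin.ext (by simp; omega)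
    rw [e] at h1
    exact absurd (hi ⟨i.val-1, by omega⟩ (by rw [Fin.lt_def]; change i.val - 1 < i.val; omega)) (not_lt.mpr h1.le)
  have hlt : i.val + 1 < 2*n+1 := by
    rcases Nat.lt_or_ge (i.val+1) (2*n+1) with h | h
    · exact h
    · exfalso; apply hodd
      have : i.val = 2*n := by omega
      rw [this]; exact even_two_mul n
  have h1 := h i hlt
  simp only [hodd, if_false] at h1
  exact ⟨⟨i.val+1, hlt⟩, by rw [Fin.lt_def]; simp, h1⟩

lemma Wt_eq (x : ℝ) {n : ℕ} (σ : Equiv.Perm (Fin (2*n+1))) (h : DownUp σ) :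
    x ^ (mmp1 σ + if (σ ⟨0, by omega⟩).val = 2*n then 1 else 0) = Wt x σ := by
  classical
  unfold Wt
  rw [Finset.prod_ite, Finset.prod_const, Finset.prod_const_one, mul_one]
  congr 1
  have hm : ∀ i, Matches1 σ i ↔ (∀ j, j < i → σ i < σ j) ∧ ¬ (i.val = 0 ∧ (σ i).val = 2*n) := by
    intro i
    have hlr : (¬ ∃ j, j < i ∧ σ j < σ i) ↔ (∀ j, j < i → σ i < σ j) := by
      push Not
      refine forall_congr' fun j => ⟨fun hh hj => lt_of_le_of_ne (hh hj) ?_, fun hh hj => (hh hj).le⟩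
      intro he; exact hj.ne' (σ.injective he)
    unfold Matches1
    rw [hlr, and_comm]
    refine and_congr_right fun hi => ?_
    by_cases h0 : i.val = 0
    · simp only [h0, true_and]
      constructor
      · rintro ⟨j, -, hj⟩ he
        have := (σ j).isLt
        rw [Fin.lt_def] at hj; omega
      · intro hne
        refine ⟨σ.symm (Fin.last _), ?_, ?_⟩
        · rw [Fin.lt_def, h0, Nat.pos_iff_ne_zero]
          intro hz
          have : σ.symm (Fin.last _) = i := Fin.ext (by rw [hz, h0])
          rw [Equiv.symm_apply_eq] at this
          apply hne; rw [← this]; simp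
        · simp only [Equiv.apply_symm_apply, Fin.lt_def, Fin.val_last]
          have := (σ i).isLt; omega
    · simp only [h0, false_and, not_false_eq_true, iff_true]
      exact lrmin_match σ h i hi h0
  unfold mmp1
  set z : Fin (2*n+1) := ⟨0, by omega⟩ with hz
  set S := Finset.univ.filter (fun i => ∀ j, j < i → σ i < σ j) with hS
  have hzS : z ∈ S := by
    simp only [hS, Finset.mem_filter, Finset.mem_univ, true_and]
    intro j hj; rw [Fin.lt_def] at hj; simp [hz] at hj
  split_ifs with hc
  · have : {i | Matches1 σ i} = ((S.erase z : Finset _) : Set (Fin (2*n+1))) := by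
      ext i
      simp only [Set.mem_ofPred_eq, hm, Finset.coe_erase, Set.mem_sdiff, Set.mem_singleton_iff, hS,
        Finset.coe_filter, Finset.mem_univ, true_and]
      refine and_congr_right fun _ => not_congr ⟨fun hh => Fin.ext hh.1, ?_⟩
      rintro rfl; exact ⟨rfl, hc⟩
    rw [this, Set.ncard_coe_finset]
    exact Finset.card_erase_add_one hzS
  · have : {i | Matches1 σ i} = (S : Set (Fin (2*n+1))) := by
      ext i
      simp only [Set.mem_ofPred_eq, hm, hS,
        Finset.coe_filter, Finset.mem_univ, true_and, and_iff_left_iff_imp]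
      rintro _ ⟨h1, h2⟩
      have : i = z := Fin.ext h1
      subst this; exact hc h2
    rw [this, Set.ncard_coe_finset]
    simp

lemma Dbar_eq (n : ℕ) (x : ℝ) : Dbar n x = LL x (2*n) (fun _ => 1) := by
  classical
  unfold Dbar LL
  refine Finset.sum_congr rfl fun σ _ => ?_
  split_ifs with h
  · rw [mul_one, ← Wt_eq x σ h]; simp_all
  · rw [mul_one, ← Wt_eq x σ h]; simp_all
  · rfl

lemma Dbar_rec (x : ℝ) (p : ℕ) :
    Dbar p x = ∑ q ∈ Finset.range p, (-1)^q * Dbar (p-1-q) x *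
      ((2*p).choose (2*q+2) + x * (2*p).choose (2*q+1)) + (-1)^p * x := by
  simp only [Dbar_eq]
  exact DD_rec x p

lemma sum_split_even (f : ℕ → ℂ) (n : ℕ) : ∑ i ∈ Finset.range (2*n), f i =
    ∑ k ∈ Finset.range n, f (2*k) + ∑ k ∈ Finset.range n, f (2*k+1) := by
  induction n with
  | zero => simp
  | succ n ih =>
    rw [show 2*(n+1) = 2*n+1+1 by ring, Finset.sum_range_succ, Finset.sum_range_succ, ih,
      Finset.sum_range_succ, Finset.sum_range_succ]
    ring

lemma coeff_even (x : ℂ) (a c s : ℕ → ℂ) (hc0 : ∀ k, c (2*k) = (-1)^k) (hc1 : ∀ k, c (2*k+1) = 0)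
    (hs0 : ∀ k, s (2*k) = 0) (ha : a 0 = 0)
    (hrec : ∀ n, ∑ i ∈ Finset.range (n+1), (n.choose i : ℂ) * c i * a (n-i+1) =
      x * c n + x * ∑ i ∈ Finset.range (n+1), (n.choose i : ℂ) * s i * a (n-i)) (n : ℕ) :
    a (2*n) = 0 := by
  induction n using Nat.strong_induction_on with
  | _ n ih =>
    rcases n with _ | n
    · exact ha
    · have h := hrec (2*n+1)
      rw [show 2*n+1+1 = 2*(n+1) by ring, sum_split_even, sum_split_even,
        Finset.sum_range_succ'] at h
      have z1 : ∑ k ∈ Finset.range n, ((2*n+1).choose (2*(k+1)) : ℂ) * c (2*(k+1)) *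
          a (2*n+1-2*(k+1)+1) = 0 := by
        refine Finset.sum_eq_zero fun k hk => ?_
        simp at hk
        rw [show 2*n+1-2*(k+1)+1 = 2*(n-k) by omega, ih _ (by omega), mul_zero]
      have z2 : ∑ k ∈ Finset.range (n+1), ((2*n+1).choose (2*k+1) : ℂ) * c (2*k+1) *
          a (2*n+1-(2*k+1)+1) = 0 := by
        refine Finset.sum_eq_zero fun k hk => ?_
        simp [hc1]
      have z3 : ∑ k ∈ Finset.range (n+1), ((2*n+1).choose (2*k) : ℂ) * s (2*k) *
          a (2*n+1-2*k) = 0 := by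
        refine Finset.sum_eq_zero fun k hk => ?_
        simp [hs0]
      have z4 : ∑ k ∈ Finset.range (n+1), ((2*n+1).choose (2*k+1) : ℂ) * s (2*k+1) *
          a (2*n+1-(2*k+1)) = 0 := by
        refine Finset.sum_eq_zero fun k hk => ?_
        simp at hk
        rw [show 2*n+1-(2*k+1) = 2*(n-k) by omega, ih _ (by omega), mul_zero]
      rw [z1, z2, z3, z4, hc1] at h
      have := hc0 0
      simp at this
      rw [show 2*(n+1) = 2*n+1+1 by ring]
      simpa [this] using h

lemma coeff_odd (x : ℝ) (a c s : ℕ → ℂ) (hc0 : ∀ k, c (2*k) = (-1)^k) (hc1 : ∀ k, c (2*k+1) = 0)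
    (hs0 : ∀ k, s (2*k) = 0) (hs1 : ∀ k, s (2*k+1) = (-1)^k)
    (hrec : ∀ n, ∑ i ∈ Finset.range (n+1), (n.choose i : ℂ) * c i * a (n-i+1) =
      x * c n + x * ∑ i ∈ Finset.range (n+1), (n.choose i : ℂ) * s i * a (n-i)) (n : ℕ) :
    a (2*n+1) = (Dbar n x : ℂ) := by
  induction n using Nat.strong_induction_on with
  | _ n ih =>
    have h := hrec (2*n)
    rw [Finset.sum_range_succ, sum_split_even, Finset.sum_range_succ, sum_split_even] at h
    have z2 : ∑ k ∈ Finset.range n, ((2*n).choose (2*k+1) : ℂ) * c (2*k+1) *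
          a (2*n-(2*k+1)+1) = 0 := by
      refine Finset.sum_eq_zero fun k hk => ?_
      simp [hc1]
    have z3 : ∑ k ∈ Finset.range n, ((2*n).choose (2*k) : ℂ) * s (2*k) *
          a (2*n-2*k) = 0 := by
      refine Finset.sum_eq_zero fun k hk => ?_
      simp [hs0]
    rw [z2, z3, hs0, add_zero, zero_add, ← Finset.sum_range_succ
      (fun k => ((2*n).choose (2*k) : ℂ) * c (2*k) * a (2*n-2*k+1)),
      Finset.sum_range_succ'] at h
    have z1 : ∑ k ∈ Finset.range n, ((2*n).choose (2*(k+1)) : ℂ) * c (2*(k+1)) *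
          a (2*n-2*(k+1)+1) = ∑ k ∈ Finset.range n, ((2*n).choose (2*k+2) : ℂ) * (-1)^(k+1) *
          (Dbar (n-1-k) x : ℂ) := by
      refine Finset.sum_congr rfl fun k hk => ?_
      simp at hk
      rw [hc0, show 2*n-2*(k+1)+1 = 2*(n-1-k)+1 by omega, ih _ (by omega)]; rfl
    have z4 : ∑ k ∈ Finset.range n, ((2*n).choose (2*k+1) : ℂ) * s (2*k+1) *
          a (2*n-(2*k+1)) = ∑ k ∈ Finset.range n, ((2*n).choose (2*k+1) : ℂ) * (-1)^k *
          (Dbar (n-1-k) x : ℂ) := by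
      refine Finset.sum_congr rfl fun k hk => ?_
      simp at hk
      rw [hs1, show 2*n-(2*k+1) = 2*(n-1-k)+1 by omega, ih _ (by omega)]
    have c0 := hc0 0
    simp only [mul_zero, pow_zero] at c0
    rw [z1, z4, hc0 n] at h
    simp only [mul_zero, c0, Nat.choose_zero_right, Nat.cast_one, one_mul, zero_mul, add_zero,
      Nat.sub_zero] at h
    rw [← eq_sub_iff_add_eq'] at h
    rw [h, Dbar_rec]
    push_cast
    rw [Finset.mul_sum, add_sub_assoc, ← Finset.sum_sub_distrib, add_comm]
    congr 1
    · refine Finset.sum_congr rfl fun k _ => ?_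
      ring
    · ring

lemma cos_slit {z : ℂ} (hz : z ∈ Metric.ball (0:ℂ) (Real.pi/2)) : Complex.cos z ∈ Complex.slitPlane := by
  left
  have h1 : |z.re| < Real.pi/2 := lt_of_le_of_lt (Complex.abs_re_le_norm z) (by simpa using hz)
  have h2 := Real.cos_pos_of_mem_Ioo (abs_lt.mp h1)
  have h3 := Real.cosh_pos z.im
  rw [Complex.cos_eq, ← Complex.ofReal_cos, ← Complex.ofReal_cosh, ← Complex.ofReal_sin,
    ← Complex.ofReal_sinh]
  simp only [Complex.sub_re, Complex.mul_re, Complex.ofReal_re, Complex.ofReal_im, Complex.mul_im,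
    Complex.I_re, Complex.I_im]
  simp only [mul_zero, zero_mul, sub_zero, add_zero, zero_add]
  exact mul_pos h2 h3

lemma G_real (x : ℝ) (G : ℂ → ℂ) (hG0 : G 0 = 0)
    (hG : ∀ z ∈ Metric.ball (0:ℂ) (Real.pi/2), HasDerivAt G (Complex.cos z ^ (x:ℂ)) z)
    (t : ℝ) (ht : |t| < Real.pi/2) :
    G t = ((∫ z in (0:ℝ)..t, (Real.cos z) ^ x : ℝ) : ℂ) := by
  have hmem : ∀ u ∈ Set.uIcc 0 t, |u| < Real.pi/2 := by
    intro u hu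
    have := Set.abs_sub_left_of_mem_uIcc hu
    simp at this
    linarith
  have hpos : ∀ u ∈ Set.uIcc 0 t, 0 < Real.cos u := fun u hu =>
    Real.cos_pos_of_mem_Ioo (abs_lt.mp (hmem u hu))
  have hd : ∀ u ∈ Set.uIcc 0 t, HasDerivAt (fun y : ℝ => G y) (((Real.cos u) ^ x : ℝ) : ℂ) u := by
    intro u hu
    have := (hG u (by simpa using hmem u hu)).comp_ofReal
    rw [Complex.ofReal_cpow (hpos u hu).le, Complex.ofReal_cos]
    exact this
  have hcont : ContinuousOn (fun u : ℝ => (((Real.cos u) ^ x : ℝ) : ℂ)) (Set.uIcc 0 t) := by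
    apply Complex.continuous_ofReal.comp_continuousOn
    apply Real.continuous_cos.continuousOn.rpow_const
    intro u hu; left; exact (hpos u hu).ne'
  have h := intervalIntegral.integral_eq_sub_of_hasDerivAt hd hcont.intervalIntegrable
  rw [intervalIntegral.integral_ofReal] at h
  rw [h]; simp [hG0]

lemma main_complex (x : ℝ) : ∃ F : ℂ → ℂ,
    DifferentiableOn ℂ F (Metric.ball 0 (Real.pi/2)) ∧
    (∀ t : ℝ, |t| < Real.pi/2 → F t =
      ((x * ((Real.cos t)⁻¹) ^ x * ∫ z in (0:ℝ)..t, (Real.cos z) ^ x : ℝ) : ℂ)) ∧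
    (∀ z ∈ Metric.ball (0:ℂ) (Real.pi/2), Complex.cos z * deriv F z =
      x * Complex.cos z + x * (Complex.sin z * F z)) ∧ F 0 = 0 := by
  have hdiff : DifferentiableOn ℂ (fun z => Complex.cos z ^ (x:ℂ)) (Metric.ball 0 (Real.pi/2)) := by
    intro z hz
    exact ((Complex.hasDerivAt_cos z).cpow_const (cos_slit hz)).differentiableAt.differentiableWithinAt
  obtain ⟨G, hG0, hG⟩ := hdiff.isExactOn_ball.with_val_at 0 0
  have hF : ∀ z ∈ Metric.ball (0:ℂ) (Real.pi/2),
      HasDerivAt (fun z => (x:ℂ) * (Complex.cos z ^ (-(x:ℂ)) * G z))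
      (x * ((-x * Complex.cos z ^ (-(x:ℂ)-1) * (-Complex.sin z)) * G z +
        Complex.cos z ^ (-(x:ℂ)) * Complex.cos z ^ (x:ℂ))) z := by
    intro z hz
    exact (((Complex.hasDerivAt_cos z).cpow_const (cos_slit hz)).mul (hG z hz)).const_mul _
  refine ⟨_, fun z hz => (hF z hz).differentiableAt.differentiableWithinAt, ?_, ?_, ?_⟩
  · intro t ht
    have hpos := Real.cos_pos_of_mem_Ioo (abs_lt.mp ht)
    rw [G_real x G hG0 hG t ht, Real.inv_rpow hpos.le, ← Real.rpow_neg hpos.le]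
    push_cast
    rw [Complex.ofReal_cpow hpos.le]
    push_cast
    ring
  · intro z hz
    have h0 : Complex.cos z ≠ 0 := Complex.slitPlane_ne_zero (cos_slit hz)
    rw [(hF z hz).deriv, Complex.cpow_sub _ _ h0, ← Complex.cpow_add _ _ h0]
    simp
    field_simp
    ring
  · simp [hG0]

lemma cos_coeff (k : ℕ) : iteratedDeriv (2*k) Complex.cos 0 = (-1)^k := by
  simp [Complex.iteratedDeriv_even_cos]
lemma cos_coeff' (k : ℕ) : iteratedDeriv (2*k+1) Complex.cos 0 = 0 := by
  rw [Complex.iteratedDeriv_odd_cos]; simp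
lemma sin_coeff (k : ℕ) : iteratedDeriv (2*k) Complex.sin 0 = 0 := by
  simp [Complex.iteratedDeriv_even_sin]
lemma sin_coeff' (k : ℕ) : iteratedDeriv (2*k+1) Complex.sin 0 = (-1)^k := by
  rw [Complex.iteratedDeriv_odd_sin]; simp

lemma F_rec (x : ℝ) (F : ℂ → ℂ) (hF : DifferentiableOn ℂ F (Metric.ball 0 (Real.pi/2)))
    (hode : ∀ z ∈ Metric.ball (0:ℂ) (Real.pi/2), Complex.cos z * deriv F z =
      x * Complex.cos z + x * (Complex.sin z * F z)) (n : ℕ) :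
    ∑ i ∈ Finset.range (n+1), (n.choose i : ℂ) * iteratedDeriv i Complex.cos 0 *
        iteratedDeriv (n-i+1) F 0 =
      x * iteratedDeriv n Complex.cos 0 + x * ∑ i ∈ Finset.range (n+1),
        (n.choose i : ℂ) * iteratedDeriv i Complex.sin 0 * iteratedDeriv (n-i) F 0 := by
  have hb : Metric.ball (0:ℂ) (Real.pi/2) ∈ nhds 0 := Metric.ball_mem_nhds _ (by positivity)
  have hFa : AnalyticAt ℂ F 0 := hF.analyticAt hb
  have hcos : ContDiffAt ℂ n Complex.cos 0 := Complex.contDiff_cos.contDiffAt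
  have hsin : ContDiffAt ℂ n Complex.sin 0 := Complex.contDiff_sin.contDiffAt
  have heq : (Complex.cos * deriv F) =ᶠ[nhds 0]
      ((fun z => (x:ℂ) * Complex.cos z) + fun z => (x:ℂ) * (Complex.sin * F) z) := by
    filter_upwards [hb] with z hz
    exact hode z hz
  have h := heq.iteratedDeriv_eq n
  have hsF : ContDiffAt ℂ n (Complex.sin * F) 0 := hsin.mul hFa.contDiffAt
  have hxs : ContDiffAt ℂ n (fun z => (x:ℂ) * (Complex.sin * F) z) 0 := contDiffAt_const.mul hsF
  rw [iteratedDeriv_mul hcos hFa.deriv.contDiffAt, iteratedDeriv_add (contDiffAt_const.mul hcos)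
    hxs, iteratedDeriv_const_mul_field,
    iteratedDeriv_const_mul_field, iteratedDeriv_mul hsin hFa.contDiffAt] at h
  simpa only [← iteratedDeriv_succ'] using h

/-- `Σ_{n≥0} D̄^{(1,0,∅,0)}_{2n+1}(x) t^{2n+1}/(2n+1)!` converges to
`x (sec t)^x ∫_0^t (cos z)^x dz`. -/
theorem stmt5 (x t : ℝ) (ht : |t| < Real.pi / 2) :
    HasSum (fun n : ℕ => Dbar n x * t ^ (2*n+1) / (Nat.factorial (2*n+1) : ℝ))
      (x * ((Real.cos t)⁻¹) ^ x * ∫ z in (0:ℝ)..t, (Real.cos z) ^ x) := by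
  obtain ⟨F, hF, hreal, hode, hF0⟩ := main_complex x
  have hrec := F_rec x F hF hode
  have he := coeff_even x (fun n => iteratedDeriv n F 0) _ _ cos_coeff cos_coeff' sin_coeff
    (by simpa using hF0) hrec
  have ho := coeff_odd x (fun n => iteratedDeriv n F 0) _ _ cos_coeff cos_coeff' sin_coeff
    sin_coeff' hrec
  have hs := Complex.hasSum_taylorSeries_on_ball hF (z := (t:ℂ)) (by simpa using ht)
  have hinj : Function.Injective (fun n : ℕ => 2*n+1) := fun a b h => by simpa using h
  rw [← hinj.hasSum_iff, hreal t ht] at hs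
  · rw [← Complex.hasSum_ofReal]
    refine hs.congr_fun ?_
    intro n
    have := ho n
    simp only [Function.comp, this, sub_zero, smul_eq_mul]
    push_cast
    field_simp
  · intro m hm
    rcases Nat.even_or_odd' m with ⟨k, rfl | rfl⟩
    · have := he k
      rw [this]; simp
    · exact absurd ⟨k, rfl⟩ hm
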